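/- arXiv:1806.10182 — 3 statements merged into one kernel-verified Lean document; each statement's English description precedes it below -/
import Mathlib

section
/- (Non-negativity of the relative approximation error.) Let Q be a symmetric real n×n matrix with Q_{ii} > 0 for a fixed index i, let C > 0, and let α ∈ [0, C]^n. Define the single-step progress J(α, i, δ) = D(α + δ e_i) − D(α). For any approximate margin value m̃ ∈ ℝ, let δ̃ = [α_i + (1 − m̃)/Q_{ii}]_0^C − α_i be the approximate step and δ = [α_i + (1 − Q_i α)/Q_{ii}]_0^C − α_i the exact step. Then J(α, i, δ̃) ≤ J(α, i, δ); i.e., the progress made using any approximate margin never exceeds the progress of the exact coordinate ascent step. -/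
open Matrix Finset

/-- The dual SVM objective `D(α) = ∑ⱼ αⱼ − (1/2) αᵀ Q α`. -/
noncomputable def dualObj {n : ℕ} (Q : Matrix (Fin n) (Fin n) ℝ) (α : Fin n → ℝ) : ℝ :=
  (∑ j, α j) - (1 / 2) * (α ⬝ᵥ Q.mulVec α)

/-- Clamping of `a` to the interval `[0, C]`. -/
noncomputable def clamp (C a : ℝ) : ℝ := max 0 (min C a)

/-- The single-step progress `J(α, i, δ) = D(α + δ eᵢ) − D(α)`. -/
noncomputable def stepProgress {n : ℕ} (Q : Matrix (Fin n) (Fin n) ℝ)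
    (α : Fin n → ℝ) (i : Fin n) (δ : ℝ) : ℝ :=
  dualObj Q (α + δ • (Pi.single i 1 : Fin n → ℝ)) - dualObj Q α

/-! Completing the square turns the progress along coordinate `i` into a constant minus
`Q i i / 2` times the squared distance from the new coordinate value to the unconstrained maximizer
`α i + (1 - Q i ⬝ᵥ α) / Q i i`. Clamping that maximizer gives its nearest point in `[0, C]`, so no
other point of `[0, C]`, in particular no clamped approximate one, makes more progress. -/

theorem dualObj_add {n : ℕ} {Q : Matrix (Fin n) (Fin n) ℝ} (hQ : Q.IsSymm) (α v : Fin n → ℝ) :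
    dualObj Q (α + v) = dualObj Q α + (∑ j, v j - v ⬝ᵥ Q *ᵥ α - (1 / 2) * (v ⬝ᵥ Q *ᵥ v)) := by
  have hcross : α ⬝ᵥ Q *ᵥ v = v ⬝ᵥ Q *ᵥ α := by
    rw [dotProduct_mulVec, ← mulVec_transpose, hQ.eq, dotProduct_comm]
  simp only [dualObj, mulVec_add, dotProduct_add, add_dotProduct, Pi.add_apply, sum_add_distrib,
    hcross]
  ring

theorem stepProgress_eq_quadratic {n : ℕ} {Q : Matrix (Fin n) (Fin n) ℝ} (hQ : Q.IsSymm)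
    (α : Fin n → ℝ) (i : Fin n) (δ : ℝ) :
    stepProgress Q α i δ = δ * (1 - Q i ⬝ᵥ α) - δ ^ 2 * Q i i / 2 := by
  have hstep : δ • (Pi.single i 1 : Fin n → ℝ) = Pi.single i δ := by
    rw [← Pi.single_smul, smul_eq_mul, mul_one]
  have hlinear : Pi.single i δ ⬝ᵥ Q *ᵥ α = δ * (Q i ⬝ᵥ α) := single_dotProduct _ _ _
  have hquadratic : Pi.single i δ ⬝ᵥ Q *ᵥ Pi.single i δ = δ * (Q i i * δ) := by
    rw [single_dotProduct, mulVec, dotProduct_single]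
  rw [stepProgress, hstep, dualObj_add hQ, Fintype.sum_pi_single', hlinear, hquadratic]
  ring

theorem stepProgress_eq_sub_sq {n : ℕ} {Q : Matrix (Fin n) (Fin n) ℝ} (hQ : Q.IsSymm)
    {i : Fin n} (hQii : Q i i ≠ 0) (α : Fin n → ℝ) (x : ℝ) :
    stepProgress Q α i (x - α i) =
      (1 - Q i ⬝ᵥ α) ^ 2 / (2 * Q i i) -
        Q i i / 2 * (x - (α i + (1 - Q i ⬝ᵥ α) / Q i i)) ^ 2 := by
  rw [stepProgress_eq_quadratic hQ]
  field_simp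
  ring

theorem abs_max_min_sub_le_abs_sub {G : Type*} [AddCommGroup G] [LinearOrder G]
    [IsOrderedAddMonoid G] {l u x : G} (hx : x ∈ Set.Icc l u) (a : G) :
    |max l (min u a) - a| ≤ |x - a| := by
  rcases le_total a l with hal | hla
  · rw [min_eq_right (hal.trans (hx.1.trans hx.2)), max_eq_left hal,
      abs_of_nonneg (sub_nonneg.2 hal)]
    exact (sub_le_sub_right hx.1 a).trans (le_abs_self _)
  rcases le_total a u with hau | hua
  · rw [min_eq_right hau, max_eq_right hla, sub_self, abs_zero]
    exact abs_nonneg _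
  · rw [min_eq_left hua, max_eq_right (hx.1.trans hx.2), abs_sub_comm, abs_sub_comm x,
      abs_of_nonneg (sub_nonneg.2 hua)]
    exact (sub_le_sub_left hx.2 a).trans (le_abs_self _)

theorem clamp_mem_Icc {C : ℝ} (hC : 0 ≤ C) (a : ℝ) : clamp C a ∈ Set.Icc 0 C :=
  ⟨le_max_left _ _, max_le hC (min_le_left _ _)⟩

theorem approx_step_progress_le_exact_general {n : ℕ} {Q : Matrix (Fin n) (Fin n) ℝ}
    (hQ : Q.IsSymm) {i : Fin n} (hQii : 0 < Q i i) {C x : ℝ} (hx : x ∈ Set.Icc 0 C)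
    (α : Fin n → ℝ) :
    stepProgress Q α i (x - α i) ≤
      stepProgress Q α i (clamp C (α i + (1 - Q i ⬝ᵥ α) / Q i i) - α i) := by
  have hnearest (a : ℝ) : (clamp C a - a) ^ 2 ≤ (x - a) ^ 2 :=
    sq_le_sq.2 (abs_max_min_sub_le_abs_sub hx a)
  rw [stepProgress_eq_sub_sq hQ hQii.ne', stepProgress_eq_sub_sq hQ hQii.ne']
  exact sub_le_sub_left (mul_le_mul_of_nonneg_left (hnearest _) (half_pos hQii).le) _

/-- non-negativity of the relative approximation error: the progress made
using any approximate margin value `m̃` never exceeds the progress of the exact coordinate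
ascent step. -/
theorem approx_step_progress_le_exact
    {n : ℕ} (hn : 1 ≤ n) (Q : Matrix (Fin n) (Fin n) ℝ) (hQsym : Q.IsSymm)
    (i : Fin n) (hQii : 0 < Q i i) (C : ℝ) (hC : 0 < C)
    (α : Fin n → ℝ) (hα : ∀ j, α j ∈ Set.Icc 0 C)
    (mtilde : ℝ) :
    stepProgress Q α i (clamp C (α i + (1 - mtilde) / Q i i) - α i) ≤
      stepProgress Q α i (clamp C (α i + (1 - Q i ⬝ᵥ α) / Q i i) - α i) :=
  approx_step_progress_le_exact_general hQsym hQii (clamp_mem_Icc hC.le _) α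
end

section
/- (Lemma 2, SGD part, per-coordinate deterministic version.) Let Q be a real n×n matrix, C > 0, and let (i_t)_{t≥1} be any sequence of indices in {1, …, n}. Define α^{(0)} ∈ ℝ^n arbitrarily and, for t ≥ 1, the Pegasos SGD iterates α^{(t)} = α^{(t-1)} − (1/t) α^{(t-1)} + 𝟙[Q_{i_t} α^{(t-1)} < 1] · (nC/t) · e_{i_t}. If α^{(t)} → α* as t → ∞, then for every fixed index i the fraction of margin-violating steps on coordinate i converges: (1/T) · |{ t ∈ {1, …, T} : i_t = i and Q_{i_t} α^{(t-1)} < 1 }| → α*_i / (nC) as T → ∞. -/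
open Matrix Filter Finset
open scoped Classical

/-! The step size `1 / t` makes `α⁽ᵗ⁾` the running average of the update vectors
`𝟙[violation at t] · nC · e_{iₜ}`: the recursion says
`t α⁽ᵗ⁾ = (t - 1) α⁽ᵗ⁻¹⁾ + 𝟙[violation at t] · nC · e_{iₜ}`, and these equations telescope. Hence
`αᵢ⁽ᵀ⁾ / (nC)` equals, for every `T ≥ 1`, the fraction of violating steps on coordinate `i`. -/

theorem natCast_smul_eq_sum_of_running_average {𝕜 E : Type*} [DivisionRing 𝕜] [CharZero 𝕜]
    [AddCommGroup E] [Module 𝕜 E] {x v : ℕ → E}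
    (hx : ∀ t : ℕ, 1 ≤ t → x t = x (t - 1) - (1 / (t : 𝕜)) • x (t - 1) + (1 / (t : 𝕜)) • v t)
    (T : ℕ) : (T : 𝕜) • x T = ∑ t ∈ Icc 1 T, v t := by
  induction T with
  | zero => simp
  | succ T ih =>
    have hT : ((T + 1 : ℕ) : 𝕜) ≠ 0 := Nat.cast_ne_zero.2 T.succ_ne_zero
    calc ((T + 1 : ℕ) : 𝕜) • x (T + 1)
        = ((T + 1 : ℕ) : 𝕜) • x T - x T + v (T + 1) := by
          rw [hx (T + 1) T.succ_pos, Nat.add_sub_cancel, smul_add, smul_sub, smul_smul, smul_smul,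
            mul_one_div_cancel hT, one_smul, one_smul]
      _ = (T : 𝕜) • x T + v (T + 1) := by
          rw [Nat.cast_succ, add_smul, one_smul, add_sub_cancel_right]
      _ = ∑ t ∈ Icc 1 (T + 1), v t := by
          rw [ih, sum_Icc_succ_top T.succ_pos]

theorem sum_ite_smul_single_one_apply {ι τ R : Type*} [DecidableEq ι] [Semiring R]
    (s : Finset τ) (idx : τ → ι) (p : τ → Prop) [DecidablePred p] (c : R) (i : ι) :
    (∑ t ∈ s, (if p t then c else 0) • (Pi.single (idx t) 1 : ι → R)) i =
      #{t ∈ s | idx t = i ∧ p t} * c := by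
  simp only [Finset.sum_apply, Pi.smul_apply, Pi.single_apply, smul_eq_mul, mul_ite, mul_one,
    mul_zero, eq_comm (a := i), ← ite_and, ← sum_filter, sum_const, nsmul_eq_mul]

theorem sgd_margin_violation_fraction_per_coordinate_general {𝕜 ι : Type*} [Field 𝕜] [CharZero 𝕜]
    [TopologicalSpace 𝕜] [ContinuousMul 𝕜] [DecidableEq ι] {c : 𝕜} (hc : c ≠ 0) {idx : ℕ → ι}
    {p : ℕ → Prop} [DecidablePred p] {α : ℕ → ι → 𝕜}
    (hrec : ∀ t : ℕ, 1 ≤ t →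
      α t = α (t - 1) - (1 / (t : 𝕜)) • α (t - 1) +
        (if p t then c / (t : 𝕜) else 0) • (Pi.single (idx t) 1 : ι → 𝕜))
    {i : ι} {a : 𝕜} (hlim : Tendsto (fun t => α t i) atTop (nhds a)) :
    Tendsto (fun T : ℕ => (1 / (T : 𝕜)) * #{t ∈ Icc 1 T | idx t = i ∧ p t})
      atTop (nhds (a / c)) := by
  have havg : ∀ t : ℕ, 1 ≤ t → α t = α (t - 1) - (1 / (t : 𝕜)) • α (t - 1) +
      (1 / (t : 𝕜)) • (if p t then c else 0) • (Pi.single (idx t) 1 : ι → 𝕜) := fun t ht => by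
    rw [smul_smul, mul_ite, mul_zero, one_div_mul_eq_div]
    exact hrec t ht
  have hcount (T : ℕ) : (T : 𝕜) * α T i = #{t ∈ Icc 1 T | idx t = i ∧ p t} * c := by
    rw [← sum_ite_smul_single_one_apply, ← natCast_smul_eq_sum_of_running_average havg T,
      Pi.smul_apply, smul_eq_mul]
  refine (hlim.div_const c).congr' ?_
  filter_upwards [eventually_ne_atTop 0] with T hT
  rw [div_eq_iff hc, mul_assoc, ← hcount, one_div, inv_mul_cancel_left₀ (Nat.cast_ne_zero.2 hT)]

/-- Lemma 2, SGD part, per-coordinate deterministic version: along any index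
sequence, if the Pegasos SGD iterates converge to `α*`, then for every fixed coordinate `i`
the fraction of margin-violating steps on coordinate `i` converges to `α*ᵢ/(nC)`. -/
theorem sgd_margin_violation_fraction_per_coordinate
    {n : ℕ} (hn : 1 ≤ n) (Q : Matrix (Fin n) (Fin n) ℝ) (C : ℝ) (hC : 0 < C)
    (idx : ℕ → Fin n) (α : ℕ → Fin n → ℝ)
    (hrec : ∀ t : ℕ, 1 ≤ t →
      α t = α (t - 1) - (1 / (t : ℝ)) • α (t - 1) +
        (if Q (idx t) ⬝ᵥ α (t - 1) < 1 then (n * C / (t : ℝ)) else 0) •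
          (Pi.single (idx t) 1 : Fin n → ℝ))
    (αstar : Fin n → ℝ) (hlim : Tendsto α atTop (nhds αstar))
    (i : Fin n) :
    Tendsto (fun T : ℕ => (1 / (T : ℝ)) *
        ((Finset.Icc 1 T).filter
          (fun t => idx t = i ∧ Q (idx t) ⬝ᵥ α (t - 1) < 1)).card)
      atTop (nhds (αstar i / (n * C))) := by
  have hnC : (n * C : ℝ) ≠ 0 := mul_ne_zero (Nat.cast_ne_zero.2 (Nat.ne_of_gt hn)) hC.ne'
  exact sgd_margin_violation_fraction_per_coordinate_general hnC hrec (tendsto_pi_nhds.1 hlim i)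
end

section
/- (Lemma 2, SGD part, total fraction of margin violations.) Let Q be a real n×n matrix, C > 0, and let (i_t)_{t≥1} be any sequence of indices in {1, …, n}. Define α^{(0)} ∈ ℝ^n arbitrarily and, for t ≥ 1, the Pegasos SGD iterates α^{(t)} = α^{(t-1)} − (1/t) α^{(t-1)} + 𝟙[Q_{i_t} α^{(t-1)} < 1] · (nC/t) · e_{i_t}. If α^{(t)} → α* as t → ∞, then the overall fraction of optimization steps in which the target margin is violated converges: (1/T) · |{ t ∈ {1, …, T} : Q_{i_t} α^{(t-1)} < 1 }| → (1/n) ∑_{i=1}^n α*_i / C as T → ∞. -/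
open Matrix Filter Finset
open scoped Classical

/-!
Each step adds all of its mass to a single coordinate, so the coordinate sum of the iterates,
divided by the scale `c = n * C` of the updates, satisfies the recursion
`s t = s (t - 1) - s (t - 1) / t + 𝟙[violation at t] / t` of a running average. Multiplied by `t`,
the recursion telescopes: for `T ≥ 1` the fraction of violations among the first `T` steps equals
`s T`, whatever the initial iterate.
-/

section RunningAverage

variable {𝕜 E : Type*} [DivisionRing 𝕜] [CharZero 𝕜] [AddCommGroup E] [Module 𝕜 E] {s g : ℕ → E}

theorem natCast_smul_eq_sum_Icc_of_running_average
    (hs : ∀ t : ℕ, 1 ≤ t → s t = s (t - 1) - (1 / (t : 𝕜)) • s (t - 1) + (1 / (t : 𝕜)) • g t)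
    (T : ℕ) : (T : 𝕜) • s T = ∑ t ∈ Icc 1 T, g t := by
  induction T with
  | zero => simp
  | succ T ih =>
    have hT : ((T + 1 : ℕ) : 𝕜) ≠ 0 := Nat.cast_ne_zero.mpr T.succ_ne_zero
    calc ((T + 1 : ℕ) : 𝕜) • s (T + 1)
        = ((T + 1 : ℕ) : 𝕜) • s T - s T + g (T + 1) := by
          rw [hs (T + 1) T.succ_pos, add_tsub_cancel_right, smul_add, smul_sub, smul_smul,
            smul_smul, mul_one_div_cancel hT, one_smul, one_smul]
      _ = (T : 𝕜) • s T + g (T + 1) := by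
          rw [Nat.cast_succ, add_smul, one_smul, add_sub_cancel_right]
      _ = ∑ t ∈ Icc 1 (T + 1), g t := by
          rw [ih, sum_Icc_succ_top T.succ_pos]

theorem tendsto_average_of_running_average [TopologicalSpace E] {L : E}
    (hs : ∀ t : ℕ, 1 ≤ t → s t = s (t - 1) - (1 / (t : 𝕜)) • s (t - 1) + (1 / (t : 𝕜)) • g t)
    (hL : Tendsto s atTop (nhds L)) :
    Tendsto (fun T : ℕ => (1 / (T : 𝕜)) • ∑ t ∈ Icc 1 T, g t) atTop (nhds L) := by
  refine hL.congr' ?_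
  filter_upwards [eventually_ne_atTop 0] with T hT
  rw [← natCast_smul_eq_sum_Icc_of_running_average hs, one_div,
    inv_smul_smul₀ (Nat.cast_ne_zero.mpr hT)]

end RunningAverage

theorem sgd_margin_violation_fraction_total_general
    {𝕜 ι : Type*} [Field 𝕜] [CharZero 𝕜] [TopologicalSpace 𝕜] [ContinuousMul 𝕜]
    [Fintype ι] [DecidableEq ι] {c : 𝕜} (hc : c ≠ 0)
    (violated : ℕ → Prop) [DecidablePred violated] (idx : ℕ → ι) (α : ℕ → ι → 𝕜)
    (hrec : ∀ t : ℕ, 1 ≤ t →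
      α t = α (t - 1) - (1 / (t : 𝕜)) • α (t - 1) +
        (if violated t then c / (t : 𝕜) else 0) • (Pi.single (idx t) 1 : ι → 𝕜))
    {L : 𝕜} (hlim : Tendsto (fun t => ∑ i, α t i) atTop (nhds L)) :
    Tendsto (fun T : ℕ => (1 / (T : 𝕜)) * ((Icc 1 T).filter violated).card)
      atTop (nhds (L / c)) := by
  have sum_rec (t : ℕ) (ht : 1 ≤ t) :
      ∑ i, α t i = ∑ i, α (t - 1) i - (1 / (t : 𝕜)) * ∑ i, α (t - 1) i +
        if violated t then c / (t : 𝕜) else 0 := by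
    rw [hrec t ht]
    simp only [Pi.add_apply, Pi.sub_apply, Pi.smul_apply, smul_eq_mul, sum_add_distrib,
      sum_sub_distrib, ← mul_sum, sum_pi_single', mem_univ, if_true, mul_one]
  have average_rec (t : ℕ) (ht : 1 ≤ t) :
      (∑ i, α t i) / c = (∑ i, α (t - 1) i) / c - (1 / (t : 𝕜)) • ((∑ i, α (t - 1) i) / c) +
        (1 / (t : 𝕜)) • if violated t then 1 else 0 := by
    rw [sum_rec t ht, smul_eq_mul, smul_eq_mul]
    split_ifs <;> field
  simpa only [sum_boole, smul_eq_mul] using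
    tendsto_average_of_running_average average_rec (hlim.div_const c)

/-- Lemma 2, SGD part, total fraction of margin violations: along any index
sequence, if the Pegasos SGD iterates converge to `α*`, then the overall fraction of
optimization steps violating the target margin converges to `(1/n) ∑ᵢ α*ᵢ/C`. -/
theorem sgd_margin_violation_fraction_total
    {n : ℕ} (hn : 1 ≤ n) (Q : Matrix (Fin n) (Fin n) ℝ) (C : ℝ) (hC : 0 < C)
    (idx : ℕ → Fin n) (α : ℕ → Fin n → ℝ)
    (hrec : ∀ t : ℕ, 1 ≤ t →
      α t = α (t - 1) - (1 / (t : ℝ)) • α (t - 1) +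
        (if Q (idx t) ⬝ᵥ α (t - 1) < 1 then (n * C / (t : ℝ)) else 0) •
          (Pi.single (idx t) 1 : Fin n → ℝ))
    (αstar : Fin n → ℝ) (hlim : Tendsto α atTop (nhds αstar)) :
    Tendsto (fun T : ℕ => (1 / (T : ℝ)) *
        ((Finset.Icc 1 T).filter (fun t => Q (idx t) ⬝ᵥ α (t - 1) < 1)).card)
      atTop (nhds ((1 / n : ℝ) * ∑ i, αstar i / C)) := by
  rw [← sum_div, div_mul_div_comm, one_mul]
  exact sgd_margin_violation_fraction_total_general (by positivity) _ idx α hrec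
    (tendsto_finsetSum _ fun i _ => tendsto_pi_nhds.mp hlim i)
end
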